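/- Suppose the filtered velocity tracking error q_r : ℝ → (Fin n → ℝ) is differentiable and satisfies the closed-loop equation M(t) q_r′(t) = −(M(t) + C(t)) q_r(t) for all t. Let P be a matrix such that P · M(t) is symmetric for all t and P · C(t) + C(t)ᵀ · P = P · M′(t) for all t. Then the function W(t) = (1/2) q_r(t)ᵀ P M(t) q_r(t) satisfies W′(t) = −2 W(t) for all t, and consequently W(t) = W(0) · exp(−2t) for all t ≥ 0. -/

import Mathlib

/-!
Put `A = P M` and `B = P C`. Since `P` is symmetric, the hypothesis on `C` says `A' = B + Bᵀ`
(equivalently, `A' - 2 B` is skew-symmetric, the passivity property of mechanical systems), so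
`q ⬝ᵥ A' *ᵥ q = 2 (q ⬝ᵥ B *ᵥ q)` and the energy `½ q ⬝ᵥ A *ᵥ q` changes at the rate
`q ⬝ᵥ f`, where `f = A *ᵥ q' + B *ᵥ q` is the force. The closed loop provides `f = -A *ᵥ q`,
which dissipates energy at exactly twice its current value.
-/

open Matrix

section ProductRules

variable {𝕜 𝔸 m n : Type*} [NontriviallyNormedField 𝕜] [Fintype n] {t : 𝕜}

section NormedRing

variable [NormedRing 𝔸] [NormedAlgebra 𝕜 𝔸]

theorem hasDerivAt_dotProduct {u v : 𝕜 → n → 𝔸} {u' v' : n → 𝔸}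
    (hu : HasDerivAt u u' t) (hv : HasDerivAt v v' t) :
    HasDerivAt (fun s => u s ⬝ᵥ v s) (u' ⬝ᵥ v t + u t ⬝ᵥ v') t := by
  simpa only [dotProduct, Finset.sum_add_distrib] using
    HasDerivAt.fun_sum fun i (_ : i ∈ Finset.univ) =>
      (hasDerivAt_pi.1 hu i).fun_mul (hasDerivAt_pi.1 hv i)

theorem hasDerivAt_mulVec [Finite m] {A : 𝕜 → Matrix m n 𝔸} {A' : Matrix m n 𝔸}
    {v : 𝕜 → n → 𝔸} {v' : n → 𝔸} (hA : ∀ i j, HasDerivAt (fun s => A s i j) (A' i j) t)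
    (hv : HasDerivAt v v' t) :
    HasDerivAt (fun s => A s *ᵥ v s) (A' *ᵥ v t + A t *ᵥ v') t :=
  hasDerivAt_pi.2 fun i => hasDerivAt_dotProduct (hasDerivAt_pi.2 (hA i)) hv

theorem hasDerivAt_const_matrix_mul_apply {l : Type*} (P : Matrix l n 𝔸)
    {A : 𝕜 → Matrix n m 𝔸} {A' : Matrix n m 𝔸}
    (hA : ∀ i j, HasDerivAt (fun s => A s i j) (A' i j) t) (i : l) (j : m) :
    HasDerivAt (fun s => (P * A s) i j) ((P * A') i j) t := by
  simp only [mul_apply]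
  exact HasDerivAt.fun_sum fun k _ => (hA k j).const_mul (P i k)

end NormedRing

variable [NormedCommRing 𝔸] [NormedAlgebra 𝕜 𝔸] {A : 𝕜 → Matrix n n 𝔸} {A' : Matrix n n 𝔸}
  {q : 𝕜 → n → 𝔸} {q' : n → 𝔸}

theorem hasDerivAt_dotProduct_mulVec_self_of_isSymm
    (hA : ∀ i j, HasDerivAt (fun s => A s i j) (A' i j) t) (hq : HasDerivAt q q' t)
    (hsymm : (A t).IsSymm) :
    HasDerivAt (fun s => q s ⬝ᵥ (A s *ᵥ q s))
      (2 * (q t ⬝ᵥ (A t *ᵥ q')) + q t ⬝ᵥ (A' *ᵥ q t)) t := by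
  have hswap : q' ⬝ᵥ (A t *ᵥ q t) = q t ⬝ᵥ (A t *ᵥ q') := by
    rw [← dotProduct_transpose_mulVec, hsymm.eq]
  refine (hasDerivAt_dotProduct hq (hasDerivAt_mulVec hA hq)).congr_deriv ?_
  rw [dotProduct_add, hswap]
  ring

theorem hasDerivAt_dotProduct_mulVec_self_of_eq_add_transpose {B : Matrix n n 𝔸}
    (hA : ∀ i j, HasDerivAt (fun s => A s i j) (A' i j) t) (hq : HasDerivAt q q' t)
    (hsymm : (A t).IsSymm) (hB : A' = B + Bᵀ) :
    HasDerivAt (fun s => q s ⬝ᵥ (A s *ᵥ q s))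
      (2 * (q t ⬝ᵥ (A t *ᵥ q' + B *ᵥ q t))) t := by
  refine (hasDerivAt_dotProduct_mulVec_self_of_isSymm hA hq hsymm).congr_deriv ?_
  rw [hB, add_mulVec, dotProduct_add, dotProduct_add, dotProduct_transpose_mulVec]
  ring

end ProductRules

theorem eq_exp_smul_of_hasDerivAt_smul {E : Type*} [NormedAddCommGroup E] [NormedSpace ℝ E]
    {f : ℝ → E} {a : ℝ} (hf : ∀ t, HasDerivAt f (a • f t) t) (t₀ t : ℝ) :
    f t = Real.exp (a * (t - t₀)) • f t₀ := by
  have hexp : ∀ s, HasDerivAt (fun s => Real.exp (a * (s - t₀)) • f t₀)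
      (a • Real.exp (a * (s - t₀)) • f t₀) s := fun s => by
    have hlin : HasDerivAt (fun s => a * (s - t₀)) a s := by
      simpa only [mul_one] using ((hasDerivAt_id' s).sub_const t₀).const_mul a
    simpa only [smul_smul, mul_comm] using hlin.exp.smul_const (f t₀)
  have hinit : f t₀ = Real.exp (a * (t₀ - t₀)) • f t₀ := by
    rw [sub_self, mul_zero, Real.exp_zero, one_smul]
  exact congrFun (ODE_solution_unique_univ (v := fun _ x => a • x) (s := fun _ => Set.univ)
    (fun _ => (lipschitzWith_smul a).lipschitzOnWith) (fun s => ⟨hf s, Set.mem_univ _⟩)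
    (fun s => ⟨hexp s, Set.mem_univ _⟩) hinit) t

theorem statement4_general {n : Type*} [Fintype n] {M M' C : ℝ → Matrix n n ℝ}
    (hMderiv : ∀ t i j, HasDerivAt (fun s => M s i j) (M' t i j) t)
    {P : Matrix n n ℝ} (hPsymm : P.IsSymm) {q q' : ℝ → n → ℝ}
    (hq : ∀ t, HasDerivAt q (q' t) t)
    (hclosed : ∀ t, M t *ᵥ q' t = -((M t + C t) *ᵥ q t))
    (hPM : ∀ t, (P * M t).IsSymm)
    (hPC : ∀ t, P * C t + (C t)ᵀ * P = P * M' t) :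
    (∀ t, HasDerivAt (fun s => (1/2 : ℝ) * (q s ⬝ᵥ ((P * M s) *ᵥ q s)))
      (-2 * ((1/2 : ℝ) * (q t ⬝ᵥ ((P * M t) *ᵥ q t)))) t) ∧
    (∀ t, (1/2 : ℝ) * (q t ⬝ᵥ ((P * M t) *ᵥ q t))
        = (1/2 : ℝ) * (q 0 ⬝ᵥ ((P * M 0) *ᵥ q 0)) * Real.exp (-2 * t)) := by
  have hderiv : ∀ t, HasDerivAt (fun s => (1/2 : ℝ) * (q s ⬝ᵥ ((P * M s) *ᵥ q s)))
      (-2 * ((1/2 : ℝ) * (q t ⬝ᵥ ((P * M t) *ᵥ q t)))) t := fun t => by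
    have hpassive : P * M' t = P * C t + (P * C t)ᵀ := by
      rw [transpose_mul, hPsymm.eq, hPC]
    have hforce : (P * M t) *ᵥ q' t + (P * C t) *ᵥ q t = -((P * M t) *ᵥ q t) := by
      simp only [← mulVec_mulVec, hclosed t, add_mulVec, mulVec_neg, mulVec_add]
      abel
    refine ((hasDerivAt_dotProduct_mulVec_self_of_eq_add_transpose
      (hasDerivAt_const_matrix_mul_apply P (hMderiv t)) (hq t) (hPM t)
      hpassive).const_mul (1/2 : ℝ)).congr_deriv ?_
    rw [hforce, dotProduct_neg]
    ring
  refine ⟨hderiv, fun t => ?_⟩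
  simpa only [sub_zero, smul_eq_mul, mul_comm (Real.exp _)] using
    eq_exp_smul_of_hasDerivAt_smul hderiv 0 t

/-- If the filtered velocity tracking error satisfies the closed-loop
equation `M q_r′ = −(M + C) q_r`, and `P` is such that `P M(t)` is symmetric with
`P C(t) + C(t)ᵀ P = P M′(t)` for all `t`, then `W(t) = (1/2) q_r(t)ᵀ P M(t) q_r(t)`
satisfies `W′ = −2 W`, and consequently `W(t) = W(0) · exp(−2t)` for `t ≥ 0`. -/
theorem statement4 (n : ℕ) (hn : 1 ≤ n)
    (M M' C : ℝ → Matrix (Fin n) (Fin n) ℝ)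
    (hMderiv : ∀ t : ℝ, ∀ i j : Fin n, HasDerivAt (fun s => M s i j) (M' t i j) t)
    (hMsymm : ∀ t : ℝ, (M t).IsSymm)
    (hMpd : ∀ t : ℝ, (M t).PosDef)
    (hCcont : ∀ i j : Fin n, Continuous fun t => C t i j)
    (P : Matrix (Fin n) (Fin n) ℝ) (hPsymm : P.IsSymm) (hPpd : P.PosDef)
    (qr qr' : ℝ → Fin n → ℝ)
    (hqr : ∀ t : ℝ, HasDerivAt qr (qr' t) t)
    (hclosed : ∀ t : ℝ, M t *ᵥ qr' t = -((M t + C t) *ᵥ qr t))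
    (hPM : ∀ t : ℝ, (P * M t).IsSymm)
    (hPC : ∀ t : ℝ, P * C t + (C t)ᵀ * P = P * M' t) :
    (∀ t : ℝ, HasDerivAt (fun s => (1/2 : ℝ) * (qr s ⬝ᵥ ((P * M s) *ᵥ qr s)))
      (-2 * ((1/2 : ℝ) * (qr t ⬝ᵥ ((P * M t) *ᵥ qr t)))) t) ∧
    (∀ t : ℝ, 0 ≤ t →
      (1/2 : ℝ) * (qr t ⬝ᵥ ((P * M t) *ᵥ qr t))
        = (1/2 : ℝ) * (qr 0 ⬝ᵥ ((P * M 0) *ᵥ qr 0)) * Real.exp (-2 * t)) := by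
  have ⟨hderiv, hexp⟩ := statement4_general hMderiv hPsymm hqr hclosed hPM hPC
  exact ⟨hderiv, fun t _ => hexp t⟩
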